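/- Under the stated hypotheses, if the convex hull K(σ) of σ does not intersect Σ and ‖V‖ < √2·d, then ‖E_A(σ) − E_B(O_d(σ))‖ < 1. -/

import Mathlib

/-- `E` is the projection-valued spectral measure of the bounded self-adjoint operator `T`
on the complex Hilbert space `H`: each `E Δ` (for Borel `Δ ⊆ ℝ`) is an orthogonal
projection, `E` is multiplicative and countably additive (in the strong sense), `E ℝ = 1`,
each `E Δ` commutes with `T`, and on the range of `E Δ` the operator `T` has its
approximate point spectrum inside the closure of `Δ` (which uniquely characterizes the
spectral measure of `T`). -/
structure IsSpectralMeasure {H : Type*} [NormedAddCommGroup H] [InnerProductSpace ℂ H]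
    [CompleteSpace H] (T : H →L[ℂ] H) (E : Set ℝ → H →L[ℂ] H) : Prop where
  isSelfAdjoint : ∀ Δ : Set ℝ, MeasurableSet Δ → IsSelfAdjoint (E Δ)
  map_inter : ∀ Δ₁ Δ₂ : Set ℝ, MeasurableSet Δ₁ → MeasurableSet Δ₂ →
    E Δ₁ * E Δ₂ = E (Δ₁ ∩ Δ₂)
  map_univ : E Set.univ = 1
  countably_additive : ∀ Δ : ℕ → Set ℝ, (∀ n, MeasurableSet (Δ n)) →
    Pairwise (Function.onFun Disjoint Δ) →
    ∀ x : H, HasSum (fun n => E (Δ n) x) (E (⋃ n, Δ n) x)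
  commutes : ∀ Δ : Set ℝ, MeasurableSet Δ → Commute T (E Δ)
  spectrum_loc : ∀ Δ : Set ℝ, MeasurableSet Δ → ∀ x : H, E Δ x = x →
    ∀ μ : ℝ, Metric.infDist μ Δ * ‖x‖ ≤ ‖T x - (μ : ℂ) • x‖

/-!
Let `c` and `r` be the midpoint and the half-length of the convex hull of `σ`, and `T = A - c`.
Then `‖T‖ ≤ r` on the range of `P = E_A(σ)`, and `‖T x‖ ≥ (r + d) ‖x‖` on its kernel. Since `V` is
off-diagonal, with `s = ‖V‖ / √2 < d` no `T + t V` with `0 ≤ t ≤ 1` has spectrum in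
`r + s < |μ| < r + d`. The spectral projections `F_t` of `T + t V` for the inner part of the
spectrum therefore form a norm-continuous path from `P`, and `‖P x‖ ≥ ε ‖x‖` on the range of `F_t`
for some `ε > 0` independent of `t`. Under this bound `‖P - F_t‖ < 1` improves to
`‖P - F_t‖ ≤ √(1 - ε ^ 2)`, so by continuity `‖P - F_1‖ < 1`.

It remains to see that `F_1 = E_B(O_d(σ))`. A point of the hull outside `O_d(σ)` is at distance at
least `d` from `σ` and at least `2 d` from `Σ`; as `‖V‖ ^ 2 < d * (2 * d)`, it is not in the
spectrum of `B`.
-/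

section StarProjection

variable {𝕜 H : Type*} [RCLike 𝕜] [NormedAddCommGroup H] [InnerProductSpace 𝕜 H] [CompleteSpace H]
  {P Q : H →L[𝕜] H}

theorem apply_apply_of_isStarProjection (hP : IsStarProjection P) (x : H) : P (P x) = P x :=
  congr($(hP.isIdempotentElem.eq) x)

theorem apply_sub_apply_of_isStarProjection (hP : IsStarProjection P) (x : H) :
    P (x - P x) = 0 := by
  rw [map_sub, apply_apply_of_isStarProjection hP, sub_self]

theorem inner_eq_zero_of_isStarProjection (hP : IsStarProjection P) {x y : H} (hx : P x = x)
    (hy : P y = 0) : inner 𝕜 x y = 0 := by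
  rw [← hx, hP.isSelfAdjoint.isSymmetric.apply_clm, hy, inner_zero_right]

theorem norm_add_sq_of_isStarProjection (hP : IsStarProjection P) {x y : H} (hx : P x = x)
    (hy : P y = 0) : ‖x + y‖ ^ 2 = ‖x‖ ^ 2 + ‖y‖ ^ 2 := by
  simpa only [sq] using norm_add_sq_eq_norm_sq_add_norm_sq_of_inner_eq_zero x y
    (inner_eq_zero_of_isStarProjection hP hx hy)

theorem norm_sq_eq_add_of_isStarProjection (hP : IsStarProjection P) (x : H) :
    ‖x‖ ^ 2 = ‖P x‖ ^ 2 + ‖x - P x‖ ^ 2 := by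
  rw [← norm_add_sq_of_isStarProjection hP (apply_apply_of_isStarProjection hP x)
    (apply_sub_apply_of_isStarProjection hP x), add_sub_cancel]

theorem inner_eq_add_of_isStarProjection (hP : IsStarProjection P) (x y : H) :
    inner 𝕜 x y = inner 𝕜 (P x) (P y) + inner 𝕜 (x - P x) (y - P y) := by
  have hx := hP.isSelfAdjoint.isSymmetric.apply_clm x y
  have hPx := hP.isSelfAdjoint.isSymmetric.apply_clm (P x) y
  rw [apply_apply_of_isStarProjection hP] at hPx
  simp only [inner_sub_left, inner_sub_right, ← hPx, hx]
  abel

theorem norm_apply_le_of_isStarProjection (hP : IsStarProjection P) (x : H) : ‖P x‖ ≤ ‖x‖ :=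
  P.le_of_opNorm_le hP.norm_le x |>.trans_eq (one_mul _)

theorem norm_sub_apply_le_of_isStarProjection (hP : IsStarProjection P) (x : H) :
    ‖x - P x‖ ≤ ‖x‖ :=
  norm_apply_le_of_isStarProjection hP.one_sub x

theorem norm_one_sub_mul_le_of_mul_norm_le (hP : IsStarProjection P) (hQ : IsStarProjection Q)
    {ε : ℝ} (hε : 0 ≤ ε) (h : ∀ x, Q x = x → ε * ‖x‖ ≤ ‖P x‖) :
    ‖(1 - P) * Q‖ ≤ √(1 - ε ^ 2) := by
  refine ContinuousLinearMap.opNorm_le_bound _ (Real.sqrt_nonneg _) fun x ↦ ?_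
  have hpyth := norm_sq_eq_add_of_isStarProjection hP (Q x)
  have hlow : (ε * ‖Q x‖) ^ 2 ≤ ‖P (Q x)‖ ^ 2 := by
    gcongr
    exact h _ (apply_apply_of_isStarProjection hQ x)
  calc ‖((1 - P) * Q) x‖ = ‖Q x - P (Q x)‖ := rfl
    _ ≤ √((1 - ε ^ 2) * ‖Q x‖ ^ 2) := Real.le_sqrt_of_sq_le (by linarith)
    _ = √(1 - ε ^ 2) * ‖Q x‖ := by
      rw [Real.sqrt_mul' _ (by positivity), Real.sqrt_sq (by positivity)]
    _ ≤ √(1 - ε ^ 2) * ‖x‖ := by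
      gcongr
      exact norm_apply_le_of_isStarProjection hQ x

/- Since `1 - (P - Q)` is invertible and `P (1 - (P - Q)) = P Q`, every `x` in the range of `P` is
of the form `P z` with `z` in the range of `Q`, so that `‖x‖² = ⟪Q x, z⟫`. -/
theorem mul_norm_le_of_norm_sub_lt_one (hP : IsStarProjection P) (hQ : IsStarProjection Q)
    {ε : ℝ} (hε : 0 ≤ ε) (h : ∀ x, Q x = x → ε * ‖x‖ ≤ ‖P x‖) (hPQ : ‖P - Q‖ < 1) {x : H}
    (hx : P x = x) : ε * ‖x‖ ≤ ‖Q x‖ := by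
  obtain ⟨z, hQz, hPz⟩ : ∃ z, Q z = z ∧ P z = x := by
    obtain ⟨u, hu⟩ := isUnit_one_sub_of_norm_lt_one hPQ
    have hPu : P * u = P * Q := by
      rw [hu, mul_sub, mul_sub, hP.isIdempotentElem.eq]; simp
    refine ⟨Q ((↑u⁻¹ : H →L[𝕜] H) x), apply_apply_of_isStarProjection hQ _, ?_⟩
    have hux : (u : H →L[𝕜] H) ((↑u⁻¹ : H →L[𝕜] H) x) = x := congr($(u.mul_inv) x)
    exact (congr($hPu _)).symm.trans ((congrArg P hux).trans hx)
  have hinner : inner 𝕜 (Q x) z = inner 𝕜 x x := by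
    rw [hQ.isSelfAdjoint.isSymmetric.apply_clm, hQz, ← hx, hP.isSelfAdjoint.isSymmetric.apply_clm,
      hPz, hx]
  have hle : ‖x‖ * ‖x‖ ≤ ‖Q x‖ * ‖z‖ := by
    simpa [hinner, ← sq] using norm_inner_le_norm (𝕜 := 𝕜) (Q x) z
  have hz : ε * ‖z‖ ≤ ‖x‖ := hPz ▸ h z hQz
  rcases (norm_nonneg x).eq_or_lt with h0 | h0
  · rw [← h0, mul_zero]
    positivity
  · refine le_of_mul_le_mul_right ?_ h0
    calc ε * ‖x‖ * ‖x‖ = ε * (‖x‖ * ‖x‖) := mul_assoc _ _ _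
      _ ≤ ε * (‖Q x‖ * ‖z‖) := by gcongr
      _ = ‖Q x‖ * (ε * ‖z‖) := mul_left_comm _ _ _
      _ ≤ ‖Q x‖ * ‖x‖ := by gcongr

theorem norm_sub_le_of_norm_one_sub_mul_le (hP : IsStarProjection P) (hQ : IsStarProjection Q)
    {c : ℝ} (hPQ : ‖(1 - P) * Q‖ ≤ c) (hQP : ‖(1 - Q) * P‖ ≤ c) : ‖P - Q‖ ≤ c := by
  have hc : 0 ≤ c := (norm_nonneg _).trans hPQ
  have hadj : ‖P * (1 - Q)‖ ≤ c := by
    rw [← norm_star, star_mul, hP.isSelfAdjoint.star_eq, hQ.one_sub.isSelfAdjoint.star_eq]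
    exact hQP
  refine ContinuousLinearMap.opNorm_le_bound _ hc fun x ↦ le_of_sq_le_sq ?_ (by positivity)
  have hrange : ‖P (x - Q x)‖ ≤ c * ‖x - Q x‖ := by
    simpa [apply_sub_apply_of_isStarProjection hQ] using
      ContinuousLinearMap.le_of_opNorm_le _ hadj (x - Q x)
  have hker : ‖P (Q x) - Q x‖ ≤ c * ‖Q x‖ := by
    simpa [apply_apply_of_isStarProjection hQ, norm_sub_rev] using
      ContinuousLinearMap.le_of_opNorm_le _ hPQ (Q x)
  calc ‖(P - Q) x‖ ^ 2 = ‖P (x - Q x) + (P (Q x) - Q x)‖ ^ 2 := by simp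
    _ = ‖P (x - Q x)‖ ^ 2 + ‖P (Q x) - Q x‖ ^ 2 :=
      norm_add_sq_of_isStarProjection hP (apply_apply_of_isStarProjection hP _)
        (by simp [apply_apply_of_isStarProjection hP])
    _ ≤ (c * ‖x - Q x‖) ^ 2 + (c * ‖Q x‖) ^ 2 := by gcongr
    _ = (c * ‖x‖) ^ 2 := by
      rw [mul_pow c ‖x‖, norm_sq_eq_add_of_isStarProjection hQ x]; ring

/- While it is less than one, the distance of the path to its starting point is at most
`√(1 - ε²)`, so it cannot reach one continuously. -/
theorem norm_sub_lt_one_of_isPreconnected {X : Type*} [TopologicalSpace X] {s : Set X}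
    {F : X → H →L[𝕜] H} (hs : IsPreconnected s) (hF : ContinuousOn F s)
    (hproj : ∀ t ∈ s, IsStarProjection (F t)) {t₀ t₁ : X} (h₀ : t₀ ∈ s) (h₁ : t₁ ∈ s) {ε : ℝ}
    (hε : 0 < ε) (hlow : ∀ t ∈ s, ∀ x, F t x = x → ε * ‖x‖ ≤ ‖F t₀ x‖) :
    ‖F t₀ - F t₁‖ < 1 := by
  have hgap {t : X} (ht : t ∈ s) (hlt : ‖F t₀ - F t‖ < 1) : ‖F t₀ - F t‖ ≤ √(1 - ε ^ 2) :=
    norm_sub_le_of_norm_one_sub_mul_le (hproj _ h₀) (hproj t ht)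
      (norm_one_sub_mul_le_of_mul_norm_le (hproj _ h₀) (hproj t ht) hε.le (hlow t ht))
      (norm_one_sub_mul_le_of_mul_norm_le (hproj t ht) (hproj _ h₀) hε.le fun _ ↦
        mul_norm_le_of_norm_sub_lt_one (hproj _ h₀) (hproj t ht) hε.le (hlow t ht) hlt)
  have hsqrt : √(1 - ε ^ 2) < 1 := by
    rw [Real.sqrt_lt' one_pos]
    linarith [pow_pos hε 2]
  by_contra! hcon
  obtain ⟨m, hm, hm1⟩ := exists_between hsqrt
  obtain ⟨t, ht, rfl⟩ := hs.intermediate_value h₀ h₁ (continuousOn_const.sub hF).norm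
    (show m ∈ Set.Icc ‖F t₀ - F t₀‖ ‖F t₀ - F t₁‖ from
      ⟨by rw [sub_self, norm_zero]; exact (Real.sqrt_nonneg _).trans hm.le, hm1.le.trans hcon⟩)
  exact (hgap ht hm1).not_gt hm

end StarProjection

section Spectrum

theorem sub_mem_spectrum_sub_algebraMap {𝕜 A : Type*} [Field 𝕜] [Ring A] [Algebra 𝕜 A] {a : A}
    {μ : 𝕜} (hμ : μ ∈ spectrum 𝕜 a) (c : 𝕜) : μ - c ∈ spectrum 𝕜 (a - algebraMap 𝕜 A c) := by
  rw [← spectrum.sub_singleton_eq]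
  exact Set.sub_mem_sub hμ rfl

theorem sub_algebraMap_real_apply {E : Type*} [NormedAddCommGroup E] [NormedSpace ℂ E]
    (T : E →L[ℂ] E) (μ : ℝ) (x : E) :
    (T - algebraMap ℝ (E →L[ℂ] E) μ) x = T x - (μ : ℂ) • x := by
  simp [Algebra.algebraMap_eq_smul_one]

variable {H : Type*} [NormedAddCommGroup H] [InnerProductSpace ℂ H] [CompleteSpace H]
  {T : H →L[ℂ] H}

theorem isSelfAdjoint_sub_algebraMap_real (hT : IsSelfAdjoint T) (μ : ℝ) :
    IsSelfAdjoint (T - algebraMap ℝ (H →L[ℂ] H) μ) :=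
  hT.sub (.algebraMap _ (.all μ))

theorem isUnit_of_mul_norm_sq_le_norm_inner (hT : IsSelfAdjoint T) (W : H →L[ℂ] H) {ε : ℝ}
    (hε : 0 < ε) (h : ∀ x, ε * ‖x‖ ^ 2 ≤ ‖inner ℂ (T x) (W x)‖) : IsUnit T := by
  have hWT : IsUnit (star W * T) := by
    refine ContinuousLinearMap.isUnit_of_forall_le_norm_inner_map _ (c := ⟨ε, hε.le⟩) hε
      fun x ↦ ?_
    rw [mul_comm, ContinuousLinearMap.star_eq_adjoint, mul_apply_eq_comp,
      ContinuousLinearMap.adjoint_inner_left]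
    exact h x
  have hTW : IsUnit (T * W) := by
    simpa [hT.star_eq] using hWT.star
  obtain ⟨u, hu⟩ := hWT
  obtain ⟨v, hv⟩ := hTW
  exact isUnit_iff_exists_and_exists.mpr
    ⟨⟨W * ↑v⁻¹, by rw [← mul_assoc, ← hv, v.mul_inv]⟩,
      ⟨↑u⁻¹ * star W, by rw [mul_assoc, ← hu, u.inv_mul]⟩⟩

theorem notMem_spectrum_of_mul_norm_sq_le_norm_inner (hT : IsSelfAdjoint T) (W : H →L[ℂ] H)
    {ε μ : ℝ} (hε : 0 < ε) (h : ∀ x, ε * ‖x‖ ^ 2 ≤ ‖inner ℂ (T x - (μ : ℂ) • x) (W x)‖) :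
    μ ∉ spectrum ℝ T := by
  rw [spectrum.notMem_iff, ← IsUnit.neg_iff, neg_sub]
  exact isUnit_of_mul_norm_sq_le_norm_inner (isSelfAdjoint_sub_algebraMap_real hT μ) W hε fun x ↦
    (h x).trans_eq (by rw [sub_algebraMap_real_apply])

theorem notMem_spectrum_of_mul_norm_le (hT : IsSelfAdjoint T) {c μ : ℝ} (hc : 0 < c)
    (h : ∀ x, c * ‖x‖ ≤ ‖T x - (μ : ℂ) • x‖) : μ ∉ spectrum ℝ T := by
  refine notMem_spectrum_of_mul_norm_sq_le_norm_inner hT (T - algebraMap ℝ _ μ) (pow_pos hc 2)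
    fun x ↦ ?_
  have hsq : (c * ‖x‖) ^ 2 ≤ ‖T x - (μ : ℂ) • x‖ ^ 2 := by
    gcongr
    exact h x
  rw [sub_algebraMap_real_apply, inner_self_eq_norm_sq_to_K]
  simpa [mul_pow] using hsq

theorem norm_cfc_apply_le_norm_cfc_apply (T : H →L[ℂ] H) {f g : ℝ → ℝ}
    (hf : ContinuousOn f (spectrum ℝ T)) (hg : ContinuousOn g (spectrum ℝ T))
    (hfg : ∀ y ∈ spectrum ℝ T, |f y| ≤ |g y|) (x : H) : ‖cfc f T x‖ ≤ ‖cfc g T x‖ := by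
  have hsq {k : ℝ → ℝ} (hk : ContinuousOn k (spectrum ℝ T)) :
      (inner ℂ (cfc (fun y ↦ k y * k y) T x) x).re = ‖cfc k T x‖ ^ 2 := by
    have hsa : IsSelfAdjoint (cfc k T) := cfc_predicate k T
    rw [cfc_mul k k T hk hk, mul_apply_eq_comp, hsa.isSymmetric.apply_clm]
    exact inner_self_eq_norm_sq (𝕜 := ℂ) _
  have hle : cfc (fun y ↦ f y * f y) T ≤ cfc (fun y ↦ g y * g y) T :=
    cfc_mono (fun y hy ↦ abs_le_iff_mul_self_le.mp (hfg y hy)) (hf.mul hf) (hg.mul hg)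
  have hpos := (ContinuousLinearMap.le_def _ _).mp hle |>.re_inner_nonneg_left x
  rw [sub_apply, inner_sub_left, map_sub] at hpos
  refine le_of_sq_le_sq ?_ (norm_nonneg _)
  rw [← hsq hf, ← hsq hg]
  exact sub_nonneg.mp hpos

theorem mul_norm_le_norm_sub_of_le_abs_sub (hT : IsSelfAdjoint T) {δ μ : ℝ} (hδ : 0 ≤ δ)
    (h : ∀ y ∈ spectrum ℝ T, δ ≤ |y - μ|) (x : H) : δ * ‖x‖ ≤ ‖T x - (μ : ℂ) • x‖ := by
  have hle := norm_cfc_apply_le_norm_cfc_apply T (f := fun _ ↦ δ) (g := fun y ↦ y - μ)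
    (by fun_prop) (by fun_prop) (fun y hy ↦ by simpa [abs_of_nonneg hδ] using h y hy) x
  rw [cfc_sub _ _ T (by fun_prop) (by fun_prop), cfc_id' ℝ T, cfc_const μ T, cfc_const δ T,
    sub_algebraMap_real_apply] at hle
  simpa [Algebra.algebraMap_eq_smul_one, norm_smul, abs_of_nonneg hδ] using hle

end Spectrum

/-- `P` is an orthogonal projection reducing `T`, such that `‖T‖ ≤ a` on the range of `P` and
`‖T x‖ ≥ b ‖x‖` on its kernel. For `T` self-adjoint and `a < b` this characterizes `P` as the
spectral projection of `T` for `[-a, a]` and says that `T` has no spectrum in `a < |μ| < b`. -/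
structure IsGapProjection {H : Type*} [NormedAddCommGroup H] [InnerProductSpace ℂ H]
    [CompleteSpace H] (T P : H →L[ℂ] H) (a b : ℝ) : Prop where
  isStarProjection : IsStarProjection P
  commute : Commute T P
  norm_apply_le {x : H} : P x = x → ‖T x‖ ≤ a * ‖x‖
  mul_norm_le {x : H} : P x = 0 → b * ‖x‖ ≤ ‖T x‖

/-- The spectral projection of a self-adjoint `T` for the interval `(-m, m)`, by continuous
functional calculus; it is meaningful only if `m` and `-m` are not in the spectrum of `T`. -/
noncomputable def ballProjection {H : Type*} [NormedAddCommGroup H] [InnerProductSpace ℂ H]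
    [CompleteSpace H] (T : H →L[ℂ] H) (m : ℝ) : H →L[ℂ] H :=
  cfc ((Metric.ball 0 m).indicator (1 : ℝ → ℝ)) T

section GapProjection

variable {H : Type*} [NormedAddCommGroup H] [InnerProductSpace ℂ H] [CompleteSpace H]
  {T P Q : H →L[ℂ] H} {a b m : ℝ}

namespace IsGapProjection

theorem mono (hP : IsGapProjection T P a b) {a' : ℝ} (h : a ≤ a') : IsGapProjection T P a' b :=
  { hP with norm_apply_le := fun hx ↦ (hP.norm_apply_le hx).trans (by gcongr) }

theorem apply_comm (hP : IsGapProjection T P a b) (x : H) : P (T x) = T (P x) :=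
  congr($(hP.commute.eq.symm) x)

theorem eq_of_commute (hP : IsGapProjection T P a b) (hQ : IsGapProjection T Q a b)
    (hPQ : Commute P Q) (hab : a < b) : P = Q := by
  have hzero {x : H} (h₁ : ‖T x‖ ≤ a * ‖x‖) (h₂ : b * ‖x‖ ≤ ‖T x‖) : x = 0 := by
    by_contra hx
    nlinarith [norm_pos_iff.mpr hx]
  have hPP := apply_apply_of_isStarProjection hP.isStarProjection
  have hQQ := apply_apply_of_isStarProjection hQ.isStarProjection
  have hcomm (x : H) : P (Q x) = Q (P x) := congr($(hPQ.eq) x)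
  ext x
  have hPQx : P x - Q (P x) = 0 :=
    hzero (hP.norm_apply_le (by simp [hcomm, hPP])) (hQ.mul_norm_le (by simp [hQQ]))
  have hQPx : Q x - P (Q x) = 0 :=
    hzero (hQ.norm_apply_le (by simp [← hcomm, hQQ])) (hP.mul_norm_le (by simp [hPP]))
  rw [sub_eq_zero.mp hPQx, ← hcomm, ← sub_eq_zero.mp hQPx]

end IsGapProjection

theorem continuousOn_indicator_ball (m : ℝ) :
    ContinuousOn ((Metric.ball 0 m).indicator (1 : ℝ → ℝ)) {y | |y| ≠ m} := fun y hy ↦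
  (continuousOn_const.continuousAt_indicator fun hfr ↦
    hy (by simpa using Metric.frontier_ball_subset_sphere hfr)).continuousWithinAt

theorem commute_ballProjection (h : Commute T P) : Commute (ballProjection T m) P :=
  h.cfc_real _

theorem isGapProjection_ballProjection (hT : IsSelfAdjoint T) (ha : 0 ≤ a) (ham : a < m)
    (hmb : m < b) (hspec : ∀ y ∈ spectrum ℝ T, |y| ≤ a ∨ b ≤ |y|) :
    IsGapProjection T (ballProjection T m) a b := by
  have hb : 0 < b := (ha.trans_lt ham).trans hmb
  set χ := (Metric.ball 0 m).indicator (1 : ℝ → ℝ) with hχ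
  have hχ₁ {y : ℝ} (hy : |y| ≤ a) : χ y = 1 := by
    simp [hχ, hy.trans_lt ham]
  have hχ₀ {y : ℝ} (hy : b ≤ |y|) : χ y = 0 := by
    simp [hχ, hmb.le.trans hy]
  have hc : ContinuousOn χ (spectrum ℝ T) := (continuousOn_indicator_ball m).mono fun y hy ↦
    (hspec y hy).elim (fun h ↦ (h.trans_lt ham).ne) fun h ↦ (hmb.trans_le h).ne'
  have hidem : IsIdempotentElem (cfc χ T) := by
    rw [IsIdempotentElem, ← cfc_mul χ χ T hc hc]
    exact cfc_congr fun y hy ↦ by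
      rcases hspec y hy with h | h <;> simp only [hχ₁, hχ₀, h, mul_zero, mul_one]
  have hrange (x : H) : ‖T (cfc χ T x)‖ ≤ ‖a • cfc χ T x‖ := by
    have hle := norm_cfc_apply_le_norm_cfc_apply T (f := fun y ↦ y * χ y) (g := fun y ↦ a * χ y)
      (by fun_prop) (by fun_prop) (fun y hy ↦ by
        rcases hspec y hy with h | h <;> simp [hχ₁, hχ₀, h, abs_of_nonneg ha]) x
    rwa [cfc_mul (fun y ↦ y) χ T continuousOn_id hc, cfc_id' ℝ T, cfc_const_mul a χ T hc] at hle
  have hker (x : H) : ‖b • (x - cfc χ T x)‖ ≤ ‖T x‖ := by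
    have hle := norm_cfc_apply_le_norm_cfc_apply T (f := fun y ↦ b * (1 - χ y)) (g := fun y ↦ y)
      (by fun_prop) continuousOn_id (fun y hy ↦ by
        rcases hspec y hy with h | h <;> simp [hχ₁, hχ₀, h, abs_of_pos hb]) x
    rwa [cfc_id' ℝ T, cfc_const_mul b (fun y ↦ 1 - χ y) T (by fun_prop),
      cfc_sub _ _ T continuousOn_const hc, cfc_const_one ℝ T] at hle
  refine ⟨⟨hidem, cfc_predicate _ T⟩, (commute_ballProjection rfl).symm,
    fun {x} (hx : cfc χ T x = x) ↦ ?_, fun {x} (hx : cfc χ T x = 0) ↦ ?_⟩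
  · simpa only [hx, norm_smul, Real.norm_of_nonneg ha] using hrange x
  · simpa only [hx, sub_zero, norm_smul, Real.norm_of_nonneg hb.le] using hker x

theorem continuousOn_ballProjection {X : Type*} [TopologicalSpace X] {s : Set X}
    {S : X → H →L[ℂ] H} (hS : ContinuousOn S s) (hsa : ∀ t ∈ s, IsSelfAdjoint (S t))
    (hspec : ∀ t ∈ s, ∀ y ∈ spectrum ℝ (S t), |y| ≠ m) :
    ContinuousOn (fun t ↦ ballProjection (S t) m) s :=
  hS.cfc_of_mem_nhdsSet _ ((isOpen_ne_fun continuous_abs continuous_const).mem_nhdsSet.mpr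
    (Set.iUnion₂_subset hspec)) hsa (continuousOn_indicator_ball m)

end GapProjection

section OffDiagonal

theorem semiconjBy_one_sub_of_mul_mul_eq_zero {R : Type*} [Ring R] {p v : R} (h₀ : p * v * p = 0)
    (h₁ : (1 - p) * v * (1 - p) = 0) : SemiconjBy v p (1 - p) := by
  simp only [sub_mul, mul_sub, one_mul, mul_one, h₀] at h₁
  rw [SemiconjBy, sub_mul, one_mul, eq_comm, ← sub_eq_zero, ← h₁]
  abel

theorem apply_apply_of_semiconjBy_one_sub {E : Type*} [NormedAddCommGroup E] [NormedSpace ℂ E]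
    {P V : E →L[ℂ] E} (hV : SemiconjBy V P (1 - P)) (x : E) : P (V x) = V x - V (P x) := by
  have h : V (P x) = V x - P (V x) := congr($(hV.eq) x)
  rw [h, sub_sub_cancel]

/- The vectors on the right are chosen so that the off-diagonal cross terms cancel. -/
theorem mul_sq_add_mul_sq_le_inner_add_inner {E : Type*} [NormedAddCommGroup E]
    [InnerProductSpace ℝ E] {r ρ v μ : ℝ} (hρ : 0 ≤ ρ) {x₀ x₁ t₀ t₁ v₀ v₁ : E}
    (ht₀ : ‖t₀‖ ≤ r * ‖x₀‖) (ht₁ : ρ * ‖x₁‖ ≤ ‖t₁‖) (hv₀ : ‖v₀‖ ≤ v * ‖x₀‖)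
    (hv : inner ℝ v₁ x₀ = inner ℝ v₀ x₁) :
    (2 * |μ| * (|μ| - r) - v ^ 2) * ‖x₀‖ ^ 2 + (ρ ^ 2 - μ ^ 2) * ‖x₁‖ ^ 2 ≤
      inner ℝ (t₀ + v₁ - μ • x₀) (-(2 * μ) • x₀) +
        inner ℝ (t₁ + v₀ - μ • x₁) (t₁ + μ • x₁ - v₀) := by
  have e₀ : inner ℝ (t₀ + v₁ - μ • x₀) (-(2 * μ) • x₀) =
      2 * μ ^ 2 * ‖x₀‖ ^ 2 - 2 * (μ * inner ℝ t₀ x₀) - 2 * μ * inner ℝ v₁ x₀ := by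
    simp only [inner_sub_left, inner_add_left, inner_smul_left, inner_smul_right,
      real_inner_self_eq_norm_sq, conj_trivial]
    ring
  have e₁ : inner ℝ (t₁ + v₀ - μ • x₁) (t₁ + μ • x₁ - v₀) =
      ‖t₁‖ ^ 2 - ‖v₀‖ ^ 2 + 2 * μ * inner ℝ v₀ x₁ - μ ^ 2 * ‖x₁‖ ^ 2 := by
    simp only [inner_sub_left, inner_add_left, inner_sub_right, inner_add_right, inner_smul_left,
      inner_smul_right, real_inner_self_eq_norm_sq, conj_trivial]
    rw [real_inner_comm v₀ t₁, real_inner_comm t₁ x₁, real_inner_comm x₁ v₀]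
    ring
  have h₀ : μ * inner ℝ t₀ x₀ ≤ |μ| * r * ‖x₀‖ ^ 2 :=
    calc μ * inner ℝ t₀ x₀ ≤ |μ| * |inner ℝ t₀ x₀| := (le_abs_self _).trans_eq (abs_mul _ _)
      _ ≤ |μ| * (r * ‖x₀‖ * ‖x₀‖) := by
        gcongr
        exact (abs_real_inner_le_norm _ _).trans (by gcongr)
      _ = |μ| * r * ‖x₀‖ ^ 2 := by ring
  have h₁ : (ρ * ‖x₁‖) ^ 2 ≤ ‖t₁‖ ^ 2 := by gcongr
  have h₂ : ‖v₀‖ ^ 2 ≤ (v * ‖x₀‖) ^ 2 := by gcongr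
  rw [e₀, e₁, hv, mul_sub, mul_assoc 2 |μ| |μ|, abs_mul_abs_self]
  linarith

variable {H : Type*} [NormedAddCommGroup H] [InnerProductSpace ℂ H] [CompleteSpace H]
  {T V P Q : H →L[ℂ] H} {a b m r ρ μ : ℝ}

theorem notMem_spectrum_add_of_mul_norm_le (hP : IsStarProjection P) (hT : IsSelfAdjoint T)
    (hV : IsSelfAdjoint V) (hTP : Commute T P) (hoff : SemiconjBy V P (1 - P)) {α β : ℝ}
    (hα : 0 < α) (hVαβ : ‖V‖ ^ 2 < α * β)
    (h₀ : ∀ x, P x = x → α * ‖x‖ ≤ ‖T x - (μ : ℂ) • x‖)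
    (h₁ : ∀ x, P x = 0 → β * ‖x‖ ≤ ‖T x - (μ : ℂ) • x‖) : μ ∉ spectrum ℝ (T + V) := by
  have hβ : 0 < β := pos_of_mul_pos_right ((sq_nonneg ‖V‖).trans_lt hVαβ) hα.le
  have hPT (x : H) : P (T x) = T (P x) := congr($(hTP.eq.symm) x)
  have hPV := apply_apply_of_semiconjBy_one_sub hoff
  refine notMem_spectrum_of_mul_norm_le (hT.add hV)
    (div_pos (sub_pos.mpr hVαβ) (by positivity : 0 < α + β + 2 * ‖V‖)) fun x ↦ ?_
  set y := (T + V) x - (μ : ℂ) • x with hy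
  have hrange : α * ‖P x‖ ≤ ‖y‖ + ‖V‖ * ‖x - P x‖ :=
    calc α * ‖P x‖ ≤ ‖T (P x) - (μ : ℂ) • P x‖ := h₀ _ (apply_apply_of_isStarProjection hP x)
      _ = ‖P y - V (x - P x)‖ := by congr 1; simp [hy, hPT, hPV]; abel
      _ ≤ ‖y‖ + ‖V‖ * ‖x - P x‖ := (norm_sub_le _ _).trans
        (add_le_add (norm_apply_le_of_isStarProjection hP y) (V.le_opNorm _))
  have hker : β * ‖x - P x‖ ≤ ‖y‖ + ‖V‖ * ‖P x‖ :=
    calc β * ‖x - P x‖ ≤ ‖T (x - P x) - (μ : ℂ) • (x - P x)‖ :=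
          h₁ _ (apply_sub_apply_of_isStarProjection hP x)
      _ = ‖y - P y - V (P x)‖ := by congr 1; simp [hy, hPT, hPV, smul_sub]; abel
      _ ≤ ‖y‖ + ‖V‖ * ‖P x‖ := (norm_sub_le _ _).trans
        (add_le_add (norm_sub_apply_le_of_isStarProjection hP y) (V.le_opNorm _))
  rw [div_mul_eq_mul_div, div_le_iff₀' (by positivity)]
  calc (α * β - ‖V‖ ^ 2) * ‖x‖ ≤ (α * β - ‖V‖ ^ 2) * (‖P x‖ + ‖x - P x‖) := by
        have := sub_pos.mpr hVαβ
        gcongr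
        simpa using norm_add_le (P x) (x - P x)
    _ ≤ (α + β + 2 * ‖V‖) * ‖y‖ := by
        have e₀ := mul_le_mul_of_nonneg_left hrange (add_nonneg hβ.le (norm_nonneg V))
        have e₁ := mul_le_mul_of_nonneg_left hker (add_nonneg hα.le (norm_nonneg V))
        linarith

namespace IsGapProjection

theorem mul_norm_sq_le_norm_inner (hP : IsGapProjection T P r ρ) (hV : IsSelfAdjoint V)
    (hoff : SemiconjBy V P (1 - P)) (hμρ : |μ| < ρ) (x : H) :
    min (2 * |μ| * (|μ| - r) - ‖V‖ ^ 2) (ρ ^ 2 - μ ^ 2) * ‖x‖ ^ 2 ≤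
      ‖inner ℂ ((T + V) x - (μ : ℂ) • x)
        ((((-(2 * μ) : ℝ) : ℂ) • P + (T + (μ : ℂ) • 1) * (1 - P) - V * P) x)‖ := by
  set y := (T + V) x - (μ : ℂ) • x with hy
  set w := (((-(2 * μ) : ℝ) : ℂ) • P + (T + (μ : ℂ) • 1) * (1 - P) - V * P) x with hw
  have hPP := apply_apply_of_isStarProjection hP.isStarProjection
  have hPV := apply_apply_of_semiconjBy_one_sub hoff
  have hPy : P y = T (P x) + V (x - P x) - (μ : ℂ) • P x := by
    simp [hy, hP.apply_comm, hPV]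
  have hQy : y - P y = T (x - P x) + V (P x) - (μ : ℂ) • (x - P x) := by
    simp [hy, hP.apply_comm, hPV, smul_sub]; abel
  have hPw : P w = ((-(2 * μ) : ℝ) : ℂ) • P x := by
    simp [hw, hP.apply_comm, hPV, hPP]
  have hQw : w - P w = T (x - P x) + (μ : ℂ) • (x - P x) - V (P x) := by
    rw [hPw]
    simp [hw, smul_sub]
    abel
  let _ : InnerProductSpace ℝ H := InnerProductSpace.complexToReal
  have hV₀₁ : inner ℝ (V (x - P x)) (P x) = inner ℝ (V (P x)) (x - P x) := by
    rw [real_inner_eq_re_inner ℂ, real_inner_eq_re_inner ℂ, hV.isSymmetric.apply_clm,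
      inner_re_symm]
  have hpyth := norm_sq_eq_add_of_isStarProjection hP.isStarProjection x
  calc _ ≤ (2 * |μ| * (|μ| - r) - ‖V‖ ^ 2) * ‖P x‖ ^ 2 + (ρ ^ 2 - μ ^ 2) * ‖x - P x‖ ^ 2 := by
        rw [hpyth, mul_add]
        gcongr
        exacts [min_le_left _ _, min_le_right _ _]
    _ ≤ inner ℝ (P y) (P w) + inner ℝ (y - P y) (w - P w) := by
        rw [hQy, hQw, hPy, hPw]
        simp only [Complex.coe_smul]
        exact mul_sq_add_mul_sq_le_inner_add_inner ((abs_nonneg μ).trans hμρ.le)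
          (hP.norm_apply_le (hPP x))
          (hP.mul_norm_le (apply_sub_apply_of_isStarProjection hP.isStarProjection x))
          (V.le_opNorm (P x)) hV₀₁
    _ ≤ ‖inner ℂ y w‖ := by
        rw [real_inner_eq_re_inner ℂ, real_inner_eq_re_inner ℂ, ← map_add,
          ← inner_eq_add_of_isStarProjection hP.isStarProjection]
        exact RCLike.re_le_norm _

theorem notMem_spectrum_add (hP : IsGapProjection T P r ρ) (hT : IsSelfAdjoint T)
    (hV : IsSelfAdjoint V) (hoff : SemiconjBy V P (1 - P)) (hμρ : |μ| < ρ)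
    (hμV : ‖V‖ ^ 2 < 2 * |μ| * (|μ| - r)) : μ ∉ spectrum ℝ (T + V) :=
  notMem_spectrum_of_mul_norm_sq_le_norm_inner (hT.add hV) _
    (lt_min (sub_pos.mpr hμV) (sub_pos.mpr (sq_lt_sq.mpr (hμρ.trans_le (le_abs_self ρ)))))
    (hP.mul_norm_sq_le_norm_inner hV hoff hμρ)

theorem sub_mul_norm_le (hP : IsGapProjection T P r ρ) (hoff : SemiconjBy V P (1 - P))
    (hρ : 0 ≤ ρ) {x : H} (hx : ‖(T + V) x‖ ≤ a * ‖x‖) :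
    (ρ - a) * ‖x‖ ≤ (ρ + ‖V‖) * ‖P x‖ := by
  have hker : T (x - P x) = (T + V) x - P ((T + V) x) - V (P x) := by
    simp [hP.apply_comm, apply_apply_of_semiconjBy_one_sub hoff]
    abel
  have hupper : ρ * ‖x - P x‖ ≤ a * ‖x‖ + ‖V‖ * ‖P x‖ :=
    calc ρ * ‖x - P x‖ ≤ ‖T (x - P x)‖ :=
          hP.mul_norm_le (apply_sub_apply_of_isStarProjection hP.isStarProjection x)
      _ ≤ ‖(T + V) x - P ((T + V) x)‖ + ‖V (P x)‖ := hker ▸ norm_sub_le _ _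
      _ ≤ a * ‖x‖ + ‖V‖ * ‖P x‖ := by
        gcongr
        exacts [(norm_sub_apply_le_of_isStarProjection hP.isStarProjection _).trans hx,
          V.le_opNorm _]
  have htri : ρ * ‖x‖ ≤ ρ * (‖P x‖ + ‖x - P x‖) := by
    gcongr
    simpa using norm_add_le (P x) (x - P x)
  linarith

theorem abs_le_or_le_abs_of_mem_spectrum_add (hP : IsGapProjection T P r ρ)
    (hT : IsSelfAdjoint T) (hV : IsSelfAdjoint V) (hoff : SemiconjBy V P (1 - P)) (hr : 0 ≤ r)
    (hra : r ≤ a) (hVa : ‖V‖ ^ 2 ≤ 2 * a * (a - r)) (hμ : μ ∈ spectrum ℝ (T + V)) :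
    |μ| ≤ a ∨ ρ ≤ |μ| := by
  by_contra! hgap
  refine hP.notMem_spectrum_add hT hV hoff hgap.2 (hVa.trans_lt ?_) hμ
  nlinarith [mul_pos (sub_pos.mpr hgap.1) ((hr.trans hra).trans_lt hgap.1)]

theorem isGapProjection_ballProjection_add (hP : IsGapProjection T P r ρ) (hT : IsSelfAdjoint T)
    (hV : IsSelfAdjoint V) (hoff : SemiconjBy V P (1 - P)) (hr : 0 ≤ r) (hra : r ≤ a)
    (hVa : ‖V‖ ^ 2 ≤ 2 * a * (a - r)) (ham : a < m) (hmρ : m < ρ) :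
    IsGapProjection (T + V) (ballProjection (T + V) m) a ρ :=
  isGapProjection_ballProjection (hT.add hV) (hr.trans hra) ham hmρ fun _ hμ ↦
    hP.abs_le_or_le_abs_of_mem_spectrum_add hT hV hoff hr hra hVa hμ

theorem ballProjection_eq (hP : IsGapProjection T P a b) (hT : IsSelfAdjoint T) (ha : 0 ≤ a)
    (ham : a < m) (hmb : m < b) : ballProjection T m = P := by
  have hball := hP.isGapProjection_ballProjection_add hT (.zero _) (.zero_left _ _) ha le_rfl
    (by simp) ham hmb
  rw [add_zero] at hball
  exact hball.eq_of_commute hP (commute_ballProjection hP.commute) (ham.trans hmb)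

theorem norm_sub_lt_one (hP : IsGapProjection T P r ρ) (hQ : IsGapProjection (T + V) Q a ρ)
    (hT : IsSelfAdjoint T) (hV : IsSelfAdjoint V) (hoff : SemiconjBy V P (1 - P)) (hr : 0 ≤ r)
    (hra : r ≤ a) (haρ : a < ρ) (hVa : ‖V‖ ^ 2 ≤ 2 * a * (a - r)) : ‖P - Q‖ < 1 := by
  obtain ⟨m, ham, hmρ⟩ := exists_between haρ
  have ha : 0 ≤ a := hr.trans hra
  have hρ : 0 < ρ := ha.trans_lt haρ
  set S : ℝ → H →L[ℂ] H := fun t ↦ T + t • V with hS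
  have hVsa (t : ℝ) : IsSelfAdjoint (t • V) := (IsSelfAdjoint.all t).smul hV
  have hVt {t : ℝ} (ht : t ∈ Set.Icc (0 : ℝ) 1) : ‖t • V‖ ≤ ‖V‖ := by
    rw [norm_smul, Real.norm_of_nonneg ht.1]
    exact mul_le_of_le_one_left (norm_nonneg V) ht.2
  have hVta {t : ℝ} (ht : t ∈ Set.Icc (0 : ℝ) 1) : ‖t • V‖ ^ 2 ≤ 2 * a * (a - r) :=
    le_trans (by gcongr; exact hVt ht) hVa
  have hF (t : ℝ) (ht : t ∈ Set.Icc (0 : ℝ) 1) :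
      IsGapProjection (S t) (ballProjection (S t) m) a ρ :=
    hP.isGapProjection_ballProjection_add hT (hVsa t) (hoff.smul_left t) hr hra (hVta ht) ham hmρ
  have hF₀ : ballProjection (S 0) m = P := by
    simpa [hS] using (hP.mono hra).ballProjection_eq hT ha ham hmρ
  have hF₁ : ballProjection (S 1) m = Q := by
    simpa [hS] using hQ.ballProjection_eq (hT.add hV) ha ham hmρ
  have hcont : ContinuousOn (fun t ↦ ballProjection (S t) m) (Set.Icc 0 1) :=
    continuousOn_ballProjection (by fun_prop) (fun t _ ↦ hT.add (hVsa t)) fun t ht _ hy ↦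
      (hP.abs_le_or_le_abs_of_mem_spectrum_add hT (hVsa t) (hoff.smul_left t) hr hra (hVta ht)
        hy).elim (fun h ↦ (h.trans_lt ham).ne) fun h ↦ (hmρ.trans_le h).ne'
  have hlow (t : ℝ) (ht : t ∈ Set.Icc (0 : ℝ) 1) (x : H) (hx : ballProjection (S t) m x = x) :
      (ρ - a) / (ρ + ‖V‖) * ‖x‖ ≤ ‖ballProjection (S 0) m x‖ := by
    rw [hF₀, div_mul_eq_mul_div, div_le_iff₀' (by positivity)]
    calc (ρ - a) * ‖x‖ ≤ (ρ + ‖t • V‖) * ‖P x‖ :=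
          hP.sub_mul_norm_le (hoff.smul_left t) hρ.le ((hF t ht).norm_apply_le hx)
      _ ≤ (ρ + ‖V‖) * ‖P x‖ := by
        gcongr
        exact hVt ht
  rw [← hF₀, ← hF₁]
  exact norm_sub_lt_one_of_isPreconnected isPreconnected_Icc hcont
    (fun t ht ↦ (hF t ht).isStarProjection) (Set.left_mem_Icc.mpr zero_le_one)
    (Set.right_mem_Icc.mpr zero_le_one) (div_pos (sub_pos.mpr haρ) (by positivity)) hlow

end IsGapProjection

end OffDiagonal

section RealSets

theorem sInf_image2_dist_le {X : Type*} [PseudoMetricSpace X] {s t : Set X} {x y : X}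
    (hx : x ∈ s) (hy : y ∈ t) : sInf (Set.image2 dist s t) ≤ dist x y :=
  csInf_le ⟨0, Set.forall_mem_image2.mpr fun _ _ _ _ ↦ dist_nonneg⟩ (Set.mem_image2_of_mem hx hy)

variable {s t : Set ℝ} {c r d y : ℝ}

theorem exists_center_radius_of_disjoint_convexHull (hs : IsCompact s) (hne : s.Nonempty)
    (hst : Disjoint (convexHull ℝ s) t) (hd : ∀ x ∈ s, ∀ y ∈ t, d ≤ dist x y) :
    ∃ c r, c - r ∈ s ∧ c + r ∈ s ∧ (∀ y ∈ s, |y - c| ≤ r) ∧ ∀ y ∈ t, r + d ≤ |y - c| := by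
  have hinf := hs.sInf_mem hne
  have hsup := hs.sSup_mem hne
  refine ⟨(sInf s + sSup s) / 2, (sSup s - sInf s) / 2, by ring_nf; exact hinf,
    by ring_nf; exact hsup, fun y hy ↦ ?_, fun y hy ↦ ?_⟩
  · rw [abs_le]
    constructor <;> linarith [csInf_le hs.bddBelow hy, le_csSup hs.bddAbove hy]
  · have hyK : y ∉ Set.Icc (sInf s) (sSup s) := fun h ↦ hst.notMem_of_mem_right hy
      (segment_subset_convexHull hinf hsup (segment_eq_Icc (h.1.trans h.2) ▸ h))
    have hyinf := hd _ hinf y hy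
    have hysup := hd _ hsup y hy
    rw [Real.dist_eq] at hyinf hysup
    rw [Set.mem_Icc, not_and_or, not_le, not_le] at hyK
    grind

theorem le_abs_sub_of_notMem_thickening (hy : y ∉ Metric.thickening d s) {x : ℝ} (hx : x ∈ s) :
    d ≤ |x - y| := by
  rw [abs_sub_comm]
  exact not_lt.mp fun h ↦ hy (Metric.mem_thickening_iff.mpr ⟨x, hx, h⟩)

theorem abs_sub_lt_add_of_mem_thickening (hs : ∀ x ∈ s, |x - c| ≤ r)
    (hy : y ∈ Metric.thickening d s) : |y - c| < r + d := by
  obtain ⟨x, hx, hyx⟩ := Metric.mem_thickening_iff.mp hy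
  rw [Real.dist_eq] at hyx
  linarith [abs_sub_le y x c, hs x hx]

theorem abs_sub_le_sub_of_notMem_thickening (hl : c - r ∈ s) (hr : c + r ∈ s)
    (hy : y ∉ Metric.thickening d s) (hyc : |y - c| < r + d) : |y - c| ≤ r - d := by
  have hyl := le_abs_sub_of_notMem_thickening hy hl
  have hyr := le_abs_sub_of_notMem_thickening hy hr
  grind

end RealSets

namespace IsSpectralMeasure

open MeasureTheory

variable {H : Type*} [NormedAddCommGroup H] [InnerProductSpace ℂ H] [CompleteSpace H]
  {T : H →L[ℂ] H} {E : Set ℝ → H →L[ℂ] H} {Δ : Set ℝ}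

theorem map_empty (hE : IsSpectralMeasure T E) : E ∅ = 0 := by
  ext x
  exact tendsto_const_nhds_iff.mp (hE.countably_additive (fun _ ↦ ∅) (fun _ ↦ .empty)
    (fun _ _ _ ↦ disjoint_bot_left) x).summable.tendsto_atTop_zero

theorem isStarProjection (hE : IsSpectralMeasure T E) (hΔ : MeasurableSet Δ) :
    IsStarProjection (E Δ) :=
  ⟨by rw [IsIdempotentElem, hE.map_inter _ _ hΔ hΔ, Set.inter_self], hE.isSelfAdjoint Δ hΔ⟩

theorem hasSum_norm_sq (hE : IsSpectralMeasure T E) {f : ℕ → Set ℝ}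
    (hf : ∀ n, MeasurableSet (f n)) (hdf : Pairwise (Function.onFun Disjoint f)) (x : H) :
    HasSum (fun n ↦ ‖E (f n) x‖ ^ 2) (‖E (⋃ n, f n) x‖ ^ 2) := by
  have hsq {Δ : Set ℝ} (hΔ : MeasurableSet Δ) : ‖E Δ x‖ ^ 2 = (inner ℂ x (E Δ x)).re := by
    rw [← apply_apply_of_isStarProjection (hE.isStarProjection hΔ),
      ← (hE.isSelfAdjoint Δ hΔ).isSymmetric.apply_clm,
      apply_apply_of_isStarProjection (hE.isStarProjection hΔ)]
    exact (inner_self_eq_norm_sq (𝕜 := ℂ) _).symm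
  simpa only [hsq, hf, MeasurableSet.iUnion hf, innerSL_apply_apply] using
    Complex.hasSum_re ((innerSL ℂ x).hasSum (hE.countably_additive f hf hdf x))

/-- The scalar spectral measure `Δ ↦ ‖E Δ x‖²` at the vector `x`; it turns statements on null sets
and complements for `E` into statements of measure theory. -/
noncomputable def scalarMeasure (hE : IsSpectralMeasure T E) (x : H) : Measure ℝ :=
  Measure.ofMeasurable (fun Δ _ ↦ ENNReal.ofReal (‖E Δ x‖ ^ 2)) (by simp [hE.map_empty])
    fun f hf hdf ↦ by
      have hsum := hE.hasSum_norm_sq hf hdf x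
      rw [← hsum.tsum_eq, ENNReal.ofReal_tsum_of_nonneg (fun _ ↦ sq_nonneg _) hsum.summable]

theorem scalarMeasure_apply (hE : IsSpectralMeasure T E) (hΔ : MeasurableSet Δ) (x : H) :
    hE.scalarMeasure x Δ = ENNReal.ofReal (‖E Δ x‖ ^ 2) :=
  Measure.ofMeasurable_apply Δ hΔ

theorem scalarMeasure_eq_zero_iff (hE : IsSpectralMeasure T E) (hΔ : MeasurableSet Δ) {x : H} :
    hE.scalarMeasure x Δ = 0 ↔ E Δ x = 0 := by
  simp [hE.scalarMeasure_apply hΔ]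

theorem map_compl (hE : IsSpectralMeasure T E) (hΔ : MeasurableSet Δ) : E Δᶜ = 1 - E Δ := by
  ext x
  have hΔE : E Δ (E Δᶜ x) = 0 := by
    simpa [hE.map_empty] using congr($(hE.map_inter Δ Δᶜ hΔ hΔ.compl) x)
  have hEΔ : E Δᶜ (E Δ x) = 0 := by
    simpa [hE.map_empty] using congr($(hE.map_inter Δᶜ Δ hΔ.compl hΔ) x)
  set y := x - E Δ x - E Δᶜ x with hy
  have hnull := measure_add_measure_compl (μ := hE.scalarMeasure y) hΔ
  rw [(hE.scalarMeasure_eq_zero_iff hΔ).mpr (by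
      simp [hy, hΔE, apply_apply_of_isStarProjection (hE.isStarProjection hΔ)]),
    (hE.scalarMeasure_eq_zero_iff hΔ.compl).mpr (by
      simp [hy, hEΔ, apply_apply_of_isStarProjection (hE.isStarProjection hΔ.compl)]),
    add_zero, eq_comm, hE.scalarMeasure_eq_zero_iff .univ, hE.map_univ] at hnull
  exact (sub_eq_zero.mp hnull).symm

theorem mul_norm_le_norm_sub (hE : IsSpectralMeasure T E) (hΔ : MeasurableSet Δ) {ρ μ : ℝ}
    (h : ∀ y ∈ Δ, ρ ≤ |y - μ|) {x : H} (hx : E Δ x = x) : ρ * ‖x‖ ≤ ‖T x - (μ : ℂ) • x‖ := by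
  rcases Δ.eq_empty_or_nonempty with rfl | hne
  · obtain rfl : x = 0 := by simpa [hE.map_empty, eq_comm] using hx
    simp
  · refine le_trans ?_ (hE.spectrum_loc Δ hΔ x hx μ)
    gcongr
    exact (Metric.le_infDist hne).mpr fun y hy ↦ by
      rw [dist_comm, Real.dist_eq]
      exact h y hy

theorem norm_sub_le_mul_norm (hE : IsSpectralMeasure T E) (hT : IsSelfAdjoint T)
    (hΔ : MeasurableSet Δ) {c r : ℝ} (hr : 0 ≤ r) (h : ∀ y ∈ Δ, |y - c| ≤ r) {x : H}
    (hx : E Δ x = x) : ‖T x - (c : ℂ) • x‖ ≤ r * ‖x‖ := by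
  have hP := hE.isStarProjection hΔ
  set S := (T - algebraMap ℝ (H →L[ℂ] H) c) * E Δ with hS
  have hcomm : Commute (T - algebraMap ℝ (H →L[ℂ] H) c) (E Δ) :=
    (hE.commutes Δ hΔ).sub_left (Algebra.commutes c (E Δ))
  have hSsa : IsSelfAdjoint S :=
    (IsSelfAdjoint.commute_iff (isSelfAdjoint_sub_algebraMap_real hT c) hP.isSelfAdjoint).mp hcomm
  have hSx (x : H) : S x = T (E Δ x) - (c : ℂ) • E Δ x := by
    rw [hS, mul_apply_eq_comp, sub_algebraMap_real_apply]
  have hspec : ∀ μ ∈ spectrum ℝ S, |μ| ≤ r := by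
    intro μ hμ
    by_contra! hrμ
    have hμ₀ : 0 < |μ| - r := sub_pos.mpr hrμ
    rw [← add_zero S] at hμ
    refine notMem_spectrum_add_of_mul_norm_le hP hSsa (.zero _) (hcomm.mul_left rfl)
      (.zero_left _ _) hμ₀ (β := |μ|) ?_ (fun x hx ↦ ?_) (fun x hx ↦ ?_) hμ
    · rw [norm_zero, zero_pow two_ne_zero]
      exact mul_pos hμ₀ (hr.trans_lt hrμ)
    · have hfar : ∀ y ∈ Δ, |μ| - r ≤ |y - (c + μ)| := fun y hy ↦ by
        have htri := abs_sub_abs_le_abs_sub μ (y - c)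
        rw [abs_sub_comm μ (y - c), sub_sub] at htri
        linarith [h y hy]
      simpa [hSx, hx, add_smul, sub_sub] using hE.mul_norm_le_norm_sub hΔ hfar hx
    · simp [hSx, hx, norm_smul]
  have hnorm : ‖S‖ ≤ r := by
    rw [← cfc_id ℝ S]
    exact norm_cfc_le hr hspec
  simpa [hSx, hx] using S.le_of_opNorm_le hnorm x

theorem map_compl_spectrum (hE : IsSpectralMeasure T E) (hT : IsSelfAdjoint T) :
    E (spectrum ℝ T)ᶜ = 0 := by
  have hopen : IsOpen (spectrum ℝ T)ᶜ := (spectrum.isClosed T).isOpen_compl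
  ext x
  refine (hE.scalarMeasure_eq_zero_iff hopen.measurableSet).mp ?_
  refine measure_null_of_locally_null _ fun μ hμ ↦ ?_
  obtain ⟨δ, hδ, hball⟩ := Metric.isOpen_iff.mp hopen μ hμ
  refine ⟨Metric.ball μ (δ / 2), mem_nhdsWithin_of_mem_nhds (Metric.ball_mem_nhds μ (half_pos hδ)),
    (hE.scalarMeasure_eq_zero_iff measurableSet_ball).mpr ?_⟩
  have hupper := hE.norm_sub_le_mul_norm hT measurableSet_ball (c := μ) (half_pos hδ).le
    (fun y hy ↦ (Metric.mem_ball.mp hy).le)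
    (apply_apply_of_isStarProjection (hE.isStarProjection measurableSet_ball) x)
  have hlower := mul_norm_le_norm_sub_of_le_abs_sub hT hδ.le
    (fun y hy ↦ not_lt.mp fun hlt ↦ hball hlt hy) (E (Metric.ball μ (δ / 2)) x)
  rw [← norm_le_zero_iff]
  nlinarith

theorem map_inter_spectrum (hE : IsSpectralMeasure T E) (hT : IsSelfAdjoint T)
    (hΔ : MeasurableSet Δ) : E (Δ ∩ spectrum ℝ T) = E Δ := by
  have hspec : MeasurableSet (spectrum ℝ T) := (spectrum.isClosed T).measurableSet
  have hone : E (spectrum ℝ T) = 1 := by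
    rw [← compl_compl (spectrum ℝ T), hE.map_compl hspec.compl, hE.map_compl_spectrum hT, sub_zero]
  rw [← hE.map_inter _ _ hΔ hspec, hone, mul_one]

theorem mul_norm_le_norm_sub_of_apply_eq_zero (hE : IsSpectralMeasure T E) (hT : IsSelfAdjoint T)
    (hΔ : MeasurableSet Δ) {ρ μ : ℝ} (h : ∀ y ∈ spectrum ℝ T, y ∉ Δ → ρ ≤ |y - μ|) {x : H}
    (hx : E Δ x = 0) : ρ * ‖x‖ ≤ ‖T x - (μ : ℂ) • x‖ :=
  hE.mul_norm_le_norm_sub (hΔ.compl.inter (spectrum.isClosed T).measurableSet)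
    (fun y hy ↦ h y hy.2 hy.1) (by
      simp [hE.map_inter_spectrum hT hΔ.compl, hE.map_compl hΔ, hx])

theorem isGapProjection (hE : IsSpectralMeasure T E) (hT : IsSelfAdjoint T)
    (hΔ : MeasurableSet Δ) {a b c : ℝ} (ha : 0 ≤ a)
    (hin : ∀ y ∈ spectrum ℝ T, y ∈ Δ → |y - c| ≤ a)
    (hout : ∀ y ∈ spectrum ℝ T, y ∉ Δ → b ≤ |y - c|) :
    IsGapProjection (T - algebraMap ℝ (H →L[ℂ] H) c) (E Δ) a b where
  isStarProjection := hE.isStarProjection hΔ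
  commute := (hE.commutes Δ hΔ).sub_left (Algebra.commutes c (E Δ))
  norm_apply_le {x} hx := by
    rw [sub_algebraMap_real_apply]
    rw [← hE.map_inter_spectrum hT hΔ] at hx
    exact hE.norm_sub_le_mul_norm hT (hΔ.inter (spectrum.isClosed T).measurableSet) ha
      (fun y hy ↦ hin y hy.2 hy.1) hx
  mul_norm_le {x} hx := by
    rw [sub_algebraMap_real_apply]
    exact hE.mul_norm_le_norm_sub_of_apply_eq_zero hT hΔ hout hx

theorem map_eq_one_sub_of_spectrum_eq_union (hE : IsSpectralMeasure T E) (hT : IsSelfAdjoint T)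
    {Δ' : Set ℝ} (hΔ : MeasurableSet Δ) (hdisj : Disjoint Δ Δ') (hspec : spectrum ℝ T = Δ ∪ Δ') :
    E Δ' = 1 - E Δ := by
  have hΔ' : Δ' = Δᶜ ∩ spectrum ℝ T := by
    rw [hspec, Set.inter_comm, ← Set.sdiff_eq, Set.union_sdiff_cancel_left hdisj.le_bot]
  rw [hΔ', hE.map_inter_spectrum hT hΔ.compl, hE.map_compl hΔ]

theorem add_le_abs_sub_of_mem_spectrum_add (hE : IsSpectralMeasure T E) (hT : IsSelfAdjoint T)
    {V : H →L[ℂ] H} (hV : IsSelfAdjoint V) (hΔ : MeasurableSet Δ)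
    (hoff : SemiconjBy V (E Δ) (1 - E Δ)) {c r d y : ℝ} (hl : c - r ∈ Δ) (hr : c + r ∈ Δ)
    (hout : ∀ z ∈ spectrum ℝ T, z ∉ Δ → r + d ≤ |z - c|) (hd : 0 < d)
    (hVd : ‖V‖ ^ 2 < d * (2 * d)) (hy : y ∈ spectrum ℝ (T + V))
    (hyΔ : y ∉ Metric.thickening d Δ) : r + d ≤ |y - c| := by
  by_contra! hyc
  have hyc' := abs_sub_le_sub_of_notMem_thickening hl hr hyΔ hyc
  have hfar (z : ℝ) (hz : z ∈ spectrum ℝ T) (hzΔ : z ∉ Δ) : 2 * d ≤ |z - y| := by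
    linarith [hout z hz hzΔ, abs_sub_le z y c]
  exact notMem_spectrum_add_of_mul_norm_le (hE.isStarProjection hΔ) hT hV (hE.commutes Δ hΔ) hoff
    hd hVd (fun _ ↦ hE.mul_norm_le_norm_sub hΔ fun _ ↦ le_abs_sub_of_notMem_thickening hyΔ)
    (fun _ ↦ hE.mul_norm_le_norm_sub_of_apply_eq_zero hT hΔ hfar) hy

theorem norm_sub_map_thickening_lt_one {V : H →L[ℂ] H} {F : Set ℝ → H →L[ℂ] H}
    (hE : IsSpectralMeasure T E) (hF : IsSpectralMeasure (T + V) F) (hT : IsSelfAdjoint T)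
    (hV : IsSelfAdjoint V) (hΔ : MeasurableSet Δ) (hoff : SemiconjBy V (E Δ) (1 - E Δ))
    {c r d : ℝ} (hl : c - r ∈ Δ) (hr : c + r ∈ Δ) (hin : ∀ y ∈ Δ, |y - c| ≤ r)
    (hout : ∀ y ∈ spectrum ℝ T, y ∉ Δ → r + d ≤ |y - c|) (hd : 0 < d) (hVd : ‖V‖ < √2 * d) :
    ‖E Δ - F (Metric.thickening d Δ)‖ < 1 := by
  obtain ⟨s, hVs, hs₀, hsd⟩ : ∃ s, ‖V‖ = √2 * s ∧ 0 ≤ s ∧ s < d :=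
    ⟨‖V‖ / √2, by field_simp, by positivity, by rwa [div_lt_iff₀' (by positivity)]⟩
  have hVsq : ‖V‖ ^ 2 = 2 * s ^ 2 := by rw [hVs, mul_pow, Real.sq_sqrt zero_le_two]
  have hr₀ : 0 ≤ r := (abs_nonneg _).trans (hin _ hl)
  have hVrs : ‖V‖ ^ 2 ≤ 2 * (r + s) * (r + s - r) := by linarith [mul_nonneg hr₀ hs₀]
  have hTc := isSelfAdjoint_sub_algebraMap_real hT c
  have hTV : T - algebraMap ℝ _ c + V = T + V - algebraMap ℝ _ c := sub_add_eq_add_sub _ _ _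
  have hP := hE.isGapProjection hT hΔ hr₀ (fun y _ ↦ hin y) hout
  have hQ := hF.isGapProjection (hT.add hV) Metric.isOpen_thickening.measurableSet
    (a := r + s) (add_nonneg hr₀ hs₀)
    (fun y hy hyΔ ↦ (hP.abs_le_or_le_abs_of_mem_spectrum_add hTc hV hoff hr₀
      (le_add_of_nonneg_right hs₀) hVrs
      (hTV ▸ sub_mem_spectrum_sub_algebraMap hy c)).resolve_right
        (abs_sub_lt_add_of_mem_thickening hin hyΔ).not_ge)
    (fun y ↦ hE.add_le_abs_sub_of_mem_spectrum_add hT hV hΔ hoff hl hr hout hd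
      (by nlinarith))
  rw [← hTV] at hQ
  exact hP.norm_sub_lt_one hQ hTc hV hoff hr₀ (le_add_of_nonneg_right hs₀) (by gcongr) hVrs

end IsSpectralMeasure

theorem norm_diff_projections_lt_one_of_convexHull_disjoint_general
    {H : Type*} [NormedAddCommGroup H] [InnerProductSpace ℂ H] [CompleteSpace H]
    {A V : H →L[ℂ] H} (hA : IsSelfAdjoint A) (hV : IsSelfAdjoint V) {σ Sig : Set ℝ}
    (hσc : IsClosed σ) (hspec : spectrum ℝ A = σ ∪ Sig) {d : ℝ}
    (hd : ∀ x ∈ σ, ∀ y ∈ Sig, d ≤ dist x y) (hd0 : 0 < d) {EA EB : Set ℝ → H →L[ℂ] H}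
    (hEA : IsSpectralMeasure A EA) (hEB : IsSpectralMeasure (A + V) EB)
    (hoff₁ : EA σ * V * EA σ = 0) (hoff₂ : EA Sig * V * EA Sig = 0)
    (hconv : Disjoint (convexHull ℝ σ) Sig) (hnorm : ‖V‖ < Real.sqrt 2 * d) :
    ‖EA σ - EB (Metric.thickening d σ)‖ < 1 := by
  rcases σ.eq_empty_or_nonempty with rfl | hne
  · simp [hEA.map_empty, hEB.map_empty]
  obtain ⟨c, r, hl, hr, hin, hout⟩ := exists_center_radius_of_disjoint_convexHull
    ((spectrum.isCompact (𝕜 := ℝ) A).of_isClosed_subset hσc (hspec ▸ Set.subset_union_left))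
    hne hconv hd
  replace hout : ∀ y ∈ spectrum ℝ A, y ∉ σ → r + d ≤ |y - c| := fun y hy hyσ ↦
    hout y ((hspec ▸ hy).resolve_left hyσ)
  rw [hEA.map_eq_one_sub_of_spectrum_eq_union hA hσc.measurableSet
    (hconv.mono_left (subset_convexHull ℝ σ)) hspec] at hoff₂
  exact hEA.norm_sub_map_thickening_lt_one hEB hA hV hσc.measurableSet
    (semiconjBy_one_sub_of_mul_mul_eq_zero hoff₁ hoff₂) hl hr hin hout hd0 hnorm

/-- **Lemma 2.6.** If the convex hull of `σ` does not intersect `Σ` and `‖V‖ < √2 d`,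
then `‖E_A(σ) − E_B(O_d(σ))‖ < 1`. -/
theorem norm_diff_projections_lt_one_of_convexHull_disjoint
    {H : Type*} [NormedAddCommGroup H] [InnerProductSpace ℂ H] [CompleteSpace H]
    [TopologicalSpace.SeparableSpace H]
    (A V B : H →L[ℂ] H) (hA : IsSelfAdjoint A) (hV : IsSelfAdjoint V) (hB : B = A + V)
    (σ Sig : Set ℝ) (hσc : IsClosed σ) (hSigc : IsClosed Sig) (hdisj : Disjoint σ Sig)
    (hspec : spectrum ℝ A = σ ∪ Sig)
    (d : ℝ) (hd : d = sInf (Set.image2 dist σ Sig)) (hd0 : 0 < d)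
    (EA EB : Set ℝ → H →L[ℂ] H) (hEA : IsSpectralMeasure A EA) (hEB : IsSpectralMeasure B EB)
    (hoff₁ : EA σ * V * EA σ = 0) (hoff₂ : EA Sig * V * EA Sig = 0)
    (hconv : Disjoint (convexHull ℝ σ) Sig)
    (hnorm : ‖V‖ < Real.sqrt 2 * d) :
    ‖EA σ - EB (Metric.thickening d σ)‖ < 1 := by
  subst hB hd
  exact norm_diff_projections_lt_one_of_convexHull_disjoint_general hA hV hσc hspec
    (fun _ hx _ hy ↦ sInf_image2_dist_le hx hy) hd0 hEA hEB hoff₁ hoff₂ hconv hnorm
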